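/- The backward implicit action function is strictly monotone in the initial value: for every x₀ ∈ M and u₁ < u₂ in ℝ, one has h_{x₀,u₁}(x,t) < h_{x₀,u₂}(x,t) for all t > 0 and all x ∈ M. (Proposition 2.2(2), Monotonicity.) -/

import Mathlib

open Filter MeasureTheory Set
open scoped RealInnerProductSpace Topology NNReal

noncomputable section

/-- The model space: the closed manifold `M` is realized as a compact subset of a
Euclidean space (Whitney embedding), and the fibers of `T*M` as Euclidean vectors. -/
abbrev Euc (n : ℕ) := EuclideanSpace ℝ (Fin n)

variable {n : ℕ}

/-- `∂H/∂p`, the gradient of `H` in the momentum variable. -/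
def pGrad (H : Euc n → Euc n → ℝ → ℝ) (x p : Euc n) (u : ℝ) : Euc n :=
  gradient (fun q => H x q u) p

/-- `∂H/∂x`, the gradient of `H` in the position variable. -/
def xGrad (H : Euc n → Euc n → ℝ → ℝ) (x p : Euc n) (u : ℝ) : Euc n :=
  gradient (fun y => H y p u) x

/-- `∂H/∂u`, the derivative of `H` in the value variable. -/
def uDeriv (H : Euc n → Euc n → ℝ → ℝ) (x p : Euc n) (u : ℝ) : ℝ :=
  deriv (fun w => H x p w) u

/-- The contact Hamiltonian vector field
`ẋ = ∂H/∂p, ṗ = −∂H/∂x − (∂H/∂u)p, u̇ = (∂H/∂p)·p − H`. -/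
def contactVF (H : Euc n → Euc n → ℝ → ℝ) :
    Euc n × Euc n × ℝ → Euc n × Euc n × ℝ := fun z =>
  (pGrad H z.1 z.2.1 z.2.2,
   -xGrad H z.1 z.2.1 z.2.2 - uDeriv H z.1 z.2.1 z.2.2 • z.2.1,
   ⟪pGrad H z.1 z.2.1 z.2.2, z.2.1⟫ - H z.1 z.2.1 z.2.2)

/-- (H1) Positive definiteness of `∂²H/∂p²`. -/
def PosDefInP (H : Euc n → Euc n → ℝ → ℝ) : Prop :=
  ∀ x u p v, v ≠ 0 → 0 < ⟪(fderiv ℝ (fun q => pGrad H x q u) p) v, v⟫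

/-- (H2) Superlinearity of `H` in `p`. -/
def Superlinear (H : Euc n → Euc n → ℝ → ℝ) : Prop :=
  ∀ x u, Tendsto (fun p : Euc n => H x p u / ‖p‖) (cocompact (Euc n)) atTop

/-- (H3) `|∂H/∂u| ≤ λ`. -/
def LipInU (H : Euc n → Euc n → ℝ → ℝ) (lam : ℝ) : Prop :=
  ∀ x p u, |uDeriv H x p u| ≤ lam

/-- `H` is a `C³` function. -/
def C3 (H : Euc n → Euc n → ℝ → ℝ) : Prop :=
  ContDiff ℝ 3 (fun z : Euc n × Euc n × ℝ => H z.1 z.2.1 z.2.2)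

/-- `L` is the Legendre transform of `H`: `L(x,v,u) = sup_p {⟨p,v⟩ − H(x,p,u)}`. -/
def IsLegendre (H L : Euc n → Euc n → ℝ → ℝ) : Prop :=
  ∀ x v u, L x v u = sSup {r | ∃ p : Euc n, r = ⟪p, v⟫ - H x p u}

/-- `Φ` is the (complete) flow of the contact Hamiltonian vector field `X_H`. -/
def IsContactFlow (H : Euc n → Euc n → ℝ → ℝ)
    (Φ : ℝ → Euc n × Euc n × ℝ → Euc n × Euc n × ℝ) : Prop :=
  (∀ z, Φ 0 z = z) ∧ ∀ z t, HasDerivAt (fun s => Φ s z) (contactVF H (Φ t z)) t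

/-- Absolutely continuous curve on `[a,b]`: an indefinite integral of an integrable map. -/
def AbsCont (γ : ℝ → Euc n) (a b : ℝ) : Prop :=
  ∃ g : ℝ → Euc n, IntervalIntegrable g volume a b ∧
    ∀ s ∈ Icc a b, γ s = γ a + ∫ τ in a..s, g τ

/-- The superdifferential `D⁺φ(x)` of `φ` at `x` (relative to `M`):
`limsup_{y→x} (φ(y) − φ(x) − ⟨p, y−x⟩)/|y−x| ≤ 0`. -/
def SuperDiff (M : Set (Euc n)) (φ : Euc n → ℝ) (x : Euc n) : Set (Euc n) :=
  {p | ∀ ε > (0:ℝ), ∀ᶠ y in 𝓝[M \ {x}] x,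
      φ y - φ x - ⟪p, y - x⟫ ≤ ε * ‖y - x‖}

/-- `φ` is a viscosity subsolution of `H(x,∂ₓu,u) = c` on `U`:
`H(x,p,φ(x)) ≤ c` for every `x ∈ U` and `p ∈ D⁺φ(x)`. -/
def IsVSub (M : Set (Euc n)) (H : Euc n → Euc n → ℝ → ℝ) (c : ℝ)
    (φ : Euc n → ℝ) (U : Set (Euc n)) : Prop :=
  ∀ x ∈ U, ∀ p ∈ SuperDiff M φ x, H x p (φ x) ≤ c

/-- `φ` is a strict viscosity subsolution of `H(x,∂ₓu,u) = 0` on `M`: a viscosity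
subsolution which is strict at every point of `M`. -/
def IsStrictVSub (M : Set (Euc n)) (H : Euc n → Euc n → ℝ → ℝ)
    (φ : Euc n → ℝ) : Prop :=
  IsVSub M H 0 φ M ∧
  ∀ x₀ ∈ M, ∃ V : Set (Euc n), IsOpen V ∧ x₀ ∈ V ∧
    ∃ c < (0:ℝ), IsVSub M H c φ (V ∩ M)

/-- The backward solution semigroup `T_t⁻`: the continuous function satisfying
`T_t⁻φ(x) = inf_{γ(t)=x} {φ(γ(0)) + ∫₀ᵗ L(γ,γ̇,T_τ⁻φ(γ(τ))) dτ}` over absolutely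
continuous curves in `M`. -/
def IsBackwardSemigroup (M : Set (Euc n)) (L : Euc n → Euc n → ℝ → ℝ)
    (φ : Euc n → ℝ) (Tm : ℝ → Euc n → ℝ) : Prop :=
  (∀ x ∈ M, Tm 0 x = φ x) ∧
  ContinuousOn (fun q : ℝ × Euc n => Tm q.1 q.2) (Ici 0 ×ˢ M) ∧
  ∀ t > (0:ℝ), ∀ x ∈ M,
    Tm t x = sInf {r | ∃ γ : ℝ → Euc n, AbsCont γ 0 t ∧
      (∀ τ ∈ Icc (0:ℝ) t, γ τ ∈ M) ∧ γ t = x ∧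
      r = φ (γ 0) + ∫ τ in (0:ℝ)..t, L (γ τ) (deriv γ τ) (Tm τ (γ τ))}

/-- The forward solution semigroup `T_t⁺`: the continuous function satisfying
`T_t⁺φ(x) = sup_{γ(0)=x} {φ(γ(t)) − ∫₀ᵗ L(γ,γ̇,T_{t−τ}⁺φ(γ(τ))) dτ}` over absolutely
continuous curves in `M`. -/
def IsForwardSemigroup (M : Set (Euc n)) (L : Euc n → Euc n → ℝ → ℝ)
    (φ : Euc n → ℝ) (Tp : ℝ → Euc n → ℝ) : Prop :=
  (∀ x ∈ M, Tp 0 x = φ x) ∧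
  ContinuousOn (fun q : ℝ × Euc n => Tp q.1 q.2) (Ici 0 ×ˢ M) ∧
  ∀ t > (0:ℝ), ∀ x ∈ M,
    Tp t x = sSup {r | ∃ γ : ℝ → Euc n, AbsCont γ 0 t ∧
      (∀ τ ∈ Icc (0:ℝ) t, γ τ ∈ M) ∧ γ 0 = x ∧
      r = φ (γ t) - ∫ τ in (0:ℝ)..t, L (γ τ) (deriv γ τ) (Tp (t - τ) (γ τ))}

/-- The backward implicit action function `h_{x₀,u₀}(x,t)`, characterized by the
implicit variational principle over Lipschitz curves. -/
def IsBackwardAction (M : Set (Euc n)) (L : Euc n → Euc n → ℝ → ℝ)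
    (hb : Euc n → ℝ → Euc n → ℝ → ℝ) : Prop :=
  ContinuousOn (fun q : Euc n × ℝ × Euc n × ℝ => hb q.1 q.2.1 q.2.2.1 q.2.2.2)
    (M ×ˢ (univ : Set ℝ) ×ˢ M ×ˢ Ioi 0) ∧
  ∀ x₀ ∈ M, ∀ u₀ : ℝ, ∀ x ∈ M, ∀ t > (0:ℝ),
    hb x₀ u₀ x t = u₀ + sInf {a | ∃ γ : ℝ → Euc n,
      (∃ K : ℝ≥0, LipschitzOnWith K γ (Icc 0 t)) ∧
      (∀ τ ∈ Icc (0:ℝ) t, γ τ ∈ M) ∧ γ 0 = x₀ ∧ γ t = x ∧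
      a = ∫ τ in (0:ℝ)..t, L (γ τ) (deriv γ τ) (hb x₀ u₀ (γ τ) τ)}

/-- The forward implicit action function `h^{x₀,u₀}(x,t)`, characterized by the
implicit variational principle over Lipschitz curves. -/
def IsForwardAction (M : Set (Euc n)) (L : Euc n → Euc n → ℝ → ℝ)
    (hf : Euc n → ℝ → Euc n → ℝ → ℝ) : Prop :=
  ContinuousOn (fun q : Euc n × ℝ × Euc n × ℝ => hf q.1 q.2.1 q.2.2.1 q.2.2.2)
    (M ×ˢ (univ : Set ℝ) ×ˢ M ×ˢ Ioi 0) ∧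
  ∀ x₀ ∈ M, ∀ u₀ : ℝ, ∀ x ∈ M, ∀ t > (0:ℝ),
    hf x₀ u₀ x t = u₀ - sInf {a | ∃ γ : ℝ → Euc n,
      (∃ K : ℝ≥0, LipschitzOnWith K γ (Icc 0 t)) ∧
      (∀ τ ∈ Icc (0:ℝ) t, γ τ ∈ M) ∧ γ 0 = x ∧ γ t = x₀ ∧
      a = ∫ τ in (0:ℝ)..t, L (γ τ) (deriv γ τ) (hf x₀ u₀ (γ τ) (t - τ))}

/-- The epigraph `Γ_φ = {(x,p,u) ∈ T*M × ℝ : u ≥ φ(x)}`. -/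
def Epi (M : Set (Euc n)) (φ : Euc n → ℝ) : Set (Euc n × Euc n × ℝ) :=
  {z | z.1 ∈ M ∧ φ z.1 ≤ z.2.2}

/-- The interior `Γ̊_φ = {(x,p,u) ∈ T*M × ℝ : u > φ(x)}` of the epigraph. -/
def EpiInt (M : Set (Euc n)) (φ : Euc n → ℝ) : Set (Euc n × Euc n × ℝ) :=
  {z | z.1 ∈ M ∧ φ z.1 < z.2.2}

/-- Piecewise `C¹` curve on `[a,b]`. -/
def PiecewiseC1On (γ : ℝ → Euc n) (a b : ℝ) : Prop :=
  ContinuousOn γ (Icc a b) ∧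
  ∃ (k : ℕ) (τ : ℕ → ℝ), τ 0 = a ∧ τ k = b ∧ (∀ i < k, τ i < τ (i + 1)) ∧
    ∀ i < k, ContDiffOn ℝ 1 γ (Icc (τ i) (τ (i + 1)))

/-- One-sided Grönwall inequality: the integral bound is only needed on intervals where `P` is
positive and which start at a point where `P` is nonpositive. -/
theorem le_mul_exp_of_le_integral_of_pos {P : ℝ → ℝ} {a lam T : ℝ} (ha : 0 ≤ a) (hlam : 0 ≤ lam)
    (hP : ContinuousOn P (Icc 0 T)) (hP0 : P 0 ≤ 0)
    (h : ∀ r s, 0 ≤ r → r < s → s ≤ T → P r ≤ 0 → (∀ q ∈ Ioc r s, 0 < P q) →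
      P s ≤ a + lam * ∫ q in r..s, P q) :
    ∀ s ∈ Icc 0 T, P s ≤ a * Real.exp (lam * s) := by
  rcases lt_or_ge T 0 with hT | hT
  · intro s hs
    exact absurd (hs.1.trans hs.2) (not_le.mpr hT)
  set R : ℝ → ℝ := IccExtend hT ((Icc 0 T).domRestrict fun s => max (P s) 0) with hR
  have hRc : Continuous R := by
    refine Continuous.Icc_extend' ?_
    exact (hP.sup continuousOn_const).domRestrict
  have hRe : ∀ s ∈ Icc 0 T, R s = max (P s) 0 := fun s hs => by
    rw [hR, IccExtend_of_mem _ _ hs]; rfl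
  have hR0 : ∀ s, 0 ≤ R s := fun s => by
    simp [hR, IccExtend]
  have hRi : ∀ b c, IntervalIntegrable R volume b c := fun b c => hRc.intervalIntegrable b c
  have key : ∀ s ∈ Icc 0 T, R s ≤ a + lam * ∫ q in (0:ℝ)..s, R q := by
    intro s hs
    have hint : 0 ≤ ∫ q in (0:ℝ)..s, R q :=
      intervalIntegral.integral_nonneg hs.1 fun q _ => hR0 q
    rw [hRe s hs]
    refine max_le ?_ (by positivity)
    by_cases hPs : P s ≤ 0
    · exact hPs.trans (by positivity)
    have hsub : Icc 0 s ⊆ Icc 0 T := Icc_subset_Icc_right hs.2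
    have hcl : IsClosed (Icc 0 s ∩ P ⁻¹' Iic 0) :=
      (hP.mono hsub).preimage_isClosed_of_isClosed isClosed_Icc isClosed_Iic
    have hcomp : IsCompact (Icc 0 s ∩ P ⁻¹' Iic 0) :=
      isCompact_Icc.of_isClosed_subset hcl inter_subset_left
    obtain ⟨r, ⟨hrI, hrP⟩, hrmax⟩ := hcomp.exists_isGreatest ⟨0, ⟨le_rfl, hs.1⟩, hP0⟩
    have hrs : r < s := lt_of_le_of_ne hrI.2 fun e => hPs (e ▸ hrP)
    have hpos : ∀ q ∈ Ioc r s, 0 < P q := fun q hq => by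
      by_contra hq0
      exact absurd (hrmax ⟨⟨hrI.1.trans hq.1.le, hq.2⟩, not_lt.mp hq0⟩) (not_le.mpr hq.1)
    refine (h r s hrI.1 hrs hs.2 hrP hpos).trans ?_
    have heq : ∫ q in r..s, P q = ∫ q in r..s, R q := by
      rw [intervalIntegral.integral_of_le hrs.le, intervalIntegral.integral_of_le hrs.le]
      refine setIntegral_congr_fun measurableSet_Ioc fun q hq => ?_
      rw [hRe q (hsub ⟨hrI.1.trans hq.1.le, hq.2⟩), max_eq_left (hpos q hq).le]
    have hle : ∫ q in r..s, R q ≤ ∫ q in (0:ℝ)..s, R q := by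
      rw [← intervalIntegral.integral_add_adjacent_intervals (hRi 0 r) (hRi r s)]
      linarith [intervalIntegral.integral_nonneg (μ := volume) hrI.1 fun q _ => hR0 q]
    rw [heq]
    gcongr
  intro s hs
  have hQ := norm_le_gronwallBound_of_norm_deriv_right_le
    (f := fun s => a + lam * ∫ q in (0:ℝ)..s, R q) (f' := fun s => lam * R s)
    (δ := a) (K := lam) (ε := 0) (a := 0) (b := T)
    (by
      have := intervalIntegral.continuous_primitive hRi 0
      fun_prop)
    (fun x _ => by
      have := intervalIntegral.integral_hasDerivAt_right (hRi 0 x)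
        hRc.stronglyMeasurable.stronglyMeasurableAtFilter hRc.continuousAt
      exact ((this.const_mul lam).const_add a).hasDerivWithinAt)
    (by simp [abs_of_nonneg ha])
    (fun x hx => by
      rw [add_zero, Real.norm_of_nonneg (mul_nonneg hlam (hR0 x))]
      gcongr
      exact (key x ⟨hx.1, hx.2.le⟩).trans (le_abs_self _)) s hs
  rw [gronwallBound_ε0, sub_zero] at hQ
  calc P s ≤ R s := by rw [hRe s hs]; exact le_max_left _ _
    _ ≤ _ := (key s hs).trans ((le_abs_self _).trans hQ)

/-- A function whose derivative is bounded below by `-B - lam * |F|` and which vanishes at `0`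
is bounded below. -/
theorem neg_mul_exp_le_integral {g : ℝ → ℝ} {B lam t : ℝ} (hB : 0 ≤ B) (hlam : 0 ≤ lam)
    (ht : 0 ≤ t) (hg : IntervalIntegrable g volume 0 t)
    (h : ∀ s ∈ Ioo 0 t, -B - lam * |∫ q in (0:ℝ)..s, g q| ≤ g s) :
    -(B * t * Real.exp (lam * t)) ≤ ∫ q in (0:ℝ)..t, g q := by
  have hgi : ∀ r s, 0 ≤ r → r ≤ s → s ≤ t → IntervalIntegrable g volume r s :=
    fun r s hr hrs hs => hg.mono_set (by
      rw [uIcc_of_le hrs, uIcc_of_le ht]; exact Icc_subset_Icc hr hs)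
  have hFc : ContinuousOn (fun s => -∫ q in (0:ℝ)..s, g q) (Icc 0 t) := by
    have := intervalIntegral.continuousOn_primitive_interval' hg left_mem_uIcc
    rw [uIcc_of_le ht] at this
    exact this.neg
  have := le_mul_exp_of_le_integral_of_pos (a := B * t) (lam := lam) (by positivity) hlam hFc
    (by simp) (fun r s hr hrs hs hPr hpos => ?_) t ⟨ht, le_rfl⟩
  · linarith
  have hsub : uIcc r s ⊆ Icc 0 t := by
    rw [uIcc_of_le hrs.le]; exact Icc_subset_Icc hr hs
  have hPi : IntervalIntegrable (fun s => -∫ q in (0:ℝ)..s, g q) volume r s :=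
    (hFc.mono hsub).intervalIntegrable
  have hsplit := intervalIntegral.integral_add_adjacent_intervals
    (hgi 0 r le_rfl hr (hrs.le.trans hs)) (hgi r s hr hrs.le hs)
  have hmono : ∫ q in r..s, -g q ≤ ∫ q in r..s, (B + lam * -∫ q in (0:ℝ)..q, g q) := by
    refine intervalIntegral.integral_mono_on_of_le_Ioo hrs.le (hgi r s hr hrs.le hs).neg
      (intervalIntegrable_const.add (hPi.const_mul lam)) fun q hq => ?_
    have h1 := h q ⟨hr.trans_lt hq.1, hq.2.trans_le hs⟩
    have h2 := hpos q ⟨hq.1, hq.2.le⟩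
    rw [abs_of_neg (by linarith)] at h1
    linarith
  rw [intervalIntegral.integral_neg, intervalIntegral.integral_add intervalIntegrable_const
    (hPi.const_mul lam), intervalIntegral.integral_const, intervalIntegral.integral_const_mul,
    smul_eq_mul] at hmono
  have : (s - r) * B ≤ B * t := by
    rw [mul_comm]; gcongr; linarith
  linarith

theorem C3.continuous {H : Euc n → Euc n → ℝ → ℝ} (hC3 : C3 H) :
    Continuous fun z : Euc n × Euc n × ℝ => H z.1 z.2.1 z.2.2 :=
  ContDiff.continuous hC3

theorem C3.contDiff_momentum {H : Euc n → Euc n → ℝ → ℝ} (hC3 : C3 H) (x : Euc n) (u : ℝ) :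
    ContDiff ℝ 3 fun q => H x q u :=
  ContDiff.comp (g := fun z : Euc n × Euc n × ℝ => H z.1 z.2.1 z.2.2) hC3
    (f := fun q => (x, q, u)) (by fun_prop)

theorem C3.abs_sub_le {H : Euc n → Euc n → ℝ → ℝ} {lam : ℝ} (hC3 : C3 H) (hH3 : LipInU H lam)
    (x p : Euc n) (u w : ℝ) : |H x p u - H x p w| ≤ lam * |u - w| := by
  have hd : ContDiff ℝ 3 fun w => H x p w :=
    ContDiff.comp (g := fun z : Euc n × Euc n × ℝ => H z.1 z.2.1 z.2.2) hC3
      (f := fun w => (x, p, w)) (by fun_prop)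
  exact Convex.norm_image_sub_le_of_norm_deriv_le
    (fun w _ => (hd.differentiable (by norm_num)).differentiableAt)
    (fun w _ => hH3 x p w) convex_univ (mem_univ w) (mem_univ u)

theorem C3.convexOn_ray {H : Euc n → Euc n → ℝ → ℝ} (hC3 : C3 H) (hH1 : PosDefInP H)
    (x p : Euc n) (u : ℝ) : ConvexOn ℝ univ fun s : ℝ => H x (s • p) u := by
  have hf := hC3.contDiff_momentum x u
  have hgrad : ContDiff ℝ 2 fun q => pGrad H x q u := by
    have h2 : ContDiff ℝ 2 (fderiv ℝ fun q => H x q u) := hf.fderiv_right (by norm_num)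
    exact (InnerProductSpace.toDual ℝ (Euc n)).symm.contDiff.comp h2
  have hray : ∀ s : ℝ, HasDerivAt (fun s : ℝ => s • p) p s := fun s => by
    simpa using (hasDerivAt_id s).smul_const p
  have hd1 : ∀ s : ℝ, HasDerivAt (fun s : ℝ => H x (s • p) u) ⟪pGrad H x (s • p) u, p⟫ s := by
    intro s
    have h1 : HasGradientAt (fun q => H x q u) (pGrad H x (s • p) u) (s • p) :=
      (hf.differentiable (by norm_num)).differentiableAt.hasGradientAt
    exact h1.hasFDerivAt.comp_hasDerivAt s (hray s)
  have hd2 : ∀ s : ℝ, HasDerivAt (fun s : ℝ => ⟪pGrad H x (s • p) u, p⟫)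
      ⟪fderiv ℝ (fun q => pGrad H x q u) (s • p) p, p⟫ s := by
    intro s
    have h1 := ((hgrad.differentiable (by norm_num)).differentiableAt
      (x := s • p)).hasFDerivAt.comp_hasDerivAt s (hray s)
    simpa using h1.inner ℝ (hasDerivAt_const s p)
  have hderiv : deriv (fun s : ℝ => H x (s • p) u) = fun s => ⟪pGrad H x (s • p) u, p⟫ :=
    funext fun s => (hd1 s).deriv
  refine convexOn_univ_of_deriv2_nonneg (fun s => (hd1 s).differentiableAt) ?_ fun s => ?_
  · rw [hderiv]
    exact fun s => (hd2 s).differentiableAt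
  · change 0 ≤ deriv (deriv fun s : ℝ => H x (s • p) u) s
    rw [hderiv, (hd2 s).deriv]
    rcases eq_or_ne p 0 with rfl | hp
    · simp
    · exact (hH1 x u (s • p) p hp).le

/-- Superlinearity of a convex Hamiltonian is uniform on compact sets. -/
theorem exists_linear_lower_bound {H : Euc n → Euc n → ℝ → ℝ} {lam : ℝ} (hC3 : C3 H)
    (hH1 : PosDefInP H) (hH2 : Superlinear H) (hH3 : LipInU H lam)
    {M : Set (Euc n)} (hM : IsCompact M) (K : ℝ) :
    ∃ C, ∀ x ∈ M, ∀ p u, K * ‖p‖ - C - lam * |u| ≤ H x p u := by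
  have hcont : Continuous fun z : Euc n × Euc n => H z.1 z.2 0 :=
    hC3.continuous.comp (f := fun z : Euc n × Euc n => (z.1, z.2, (0:ℝ))) (by fun_prop)
  suffices hs : ∃ C, ∀ x ∈ M, ∀ p, K * ‖p‖ - C ≤ H x p 0 by
    obtain ⟨C, hC⟩ := hs
    refine ⟨C, fun x hx p u => ?_⟩
    have h1 := hC x hx p
    have h2 := hC3.abs_sub_le hH3 x p u 0
    rw [sub_zero] at h2
    linarith [(abs_le.mp h2).1]
  refine hM.induction_on (p := fun S => ∃ C, ∀ x ∈ S, ∀ p, K * ‖p‖ - C ≤ H x p 0) ⟨0, by simp⟩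
    (fun s t hst ⟨C, hC⟩ => ⟨C, fun x hx => hC x (hst hx)⟩) ?_ ?_
  · rintro s t ⟨C, hC⟩ ⟨D, hD⟩
    refine ⟨max C D, ?_⟩
    rintro x (hx | hx) p
    · linarith [hC x hx p, le_max_left C D]
    · linarith [hD x hx p, le_max_right C D]
  intro x _
  set A : ℝ := |H x 0 0| + 1 with hA
  have hgrow : ∀ᶠ p in cocompact (Euc n), |K| + A < H x p 0 / ‖p‖ :=
    (hH2 x 0).eventually_gt_atTop _
  have hbig : ∀ᶠ p in cocompact (Euc n), 1 ≤ ‖p‖ :=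
    (tendsto_norm_cocompact_atTop).eventually_ge_atTop 1
  obtain ⟨R₀, hR₀⟩ := Metric.closedBall_compl_subset_of_mem_cocompact (hgrow.and hbig)
    (0 : Euc n)
  set R := max R₀ 0 + 1 with hR
  have hRpos : 0 < R := by positivity
  have hsphere : ∀ p ∈ Metric.sphere (0 : Euc n) R, K * R + H x 0 0 < H x p 0 := by
    intro p hp
    have hpn : ‖p‖ = R := by simpa using hp
    obtain ⟨h1, h2⟩ := @hR₀ p (by
      have : R₀ < ‖p‖ := by rw [hpn, hR]; linarith [le_max_left R₀ 0]
      simpa using this)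
    rw [lt_div_iff₀ (by linarith), hpn] at h1
    rw [hpn] at h2
    have h3 : K * R ≤ |K| * R := by gcongr; exact le_abs_self K
    have h4 : A ≤ A * R := le_mul_of_one_le_right (by positivity) h2
    linarith [le_abs_self (H x 0 0)]
  have hopen : IsOpen {z : Euc n × Euc n | K * R + H z.1 0 0 < H z.1 z.2 0} := by
    refine isOpen_lt ?_ hcont
    exact continuous_const.add (hcont.comp (f := fun z : Euc n × Euc n => (z.1, (0 : Euc n)))
      (by fun_prop))
  obtain ⟨U, V, hU, _, hxU, hSV, hUV⟩ := generalized_tube_lemma (isCompact_singleton (x := x))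
    (isCompact_sphere (0 : Euc n) R) hopen (by
      rintro ⟨y, p⟩ ⟨hy, hp⟩
      obtain rfl : y = x := hy
      exact hsphere p hp)
  have hW : U ∩ Metric.closedBall x 1 ∈ 𝓝[M] x :=
    mem_nhdsWithin_of_mem_nhds (inter_mem (hU.mem_nhds (hxU rfl))
      (Metric.closedBall_mem_nhds x one_pos))
  obtain ⟨m, hm⟩ := (((isCompact_closedBall x 1).prod
    (isCompact_closedBall (0 : Euc n) R)).image hcont).bddBelow
  refine ⟨_, hW, |K| * R - m, fun y hy p => ?_⟩
  have hball : ∀ q : Euc n, ‖q‖ ≤ R → m ≤ H y q 0 := fun q hq =>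
    hm ⟨(y, q), ⟨hy.2, by simpa using hq⟩, rfl⟩
  rcases le_or_gt ‖p‖ R with hp | hp
  · have h1 : K * ‖p‖ ≤ |K| * R := by
      gcongr; exact le_abs_self K
    linarith [hball p hp]
  · have hp0 : 0 < ‖p‖ := hRpos.trans hp
    have h1 : K * R + H y 0 0 < H y ((R / ‖p‖) • p) 0 := by
      refine @hUV (y, (R / ‖p‖) • p) ⟨hy.1, hSV ?_⟩
      rw [mem_sphere_zero_iff_norm, norm_smul, norm_div, norm_norm, Real.norm_of_nonneg hRpos.le,
        div_mul_cancel₀ _ hp0.ne']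
    have h2 := (hC3.convexOn_ray hH1 y p 0).2 (mem_univ 0) (mem_univ 1)
      (show 0 ≤ 1 - R / ‖p‖ by rw [sub_nonneg, div_le_one hp0]; exact hp.le)
      (show 0 ≤ R / ‖p‖ by positivity) (by ring)
    simp only [smul_eq_mul, mul_zero, mul_one, zero_add, zero_smul, one_smul] at h2
    have h3 : K * R < R / ‖p‖ * (H y p 0 - H y 0 0) := by linarith
    rw [div_mul_eq_mul_div, lt_div_iff₀ hp0] at h3
    have h4 : K * ‖p‖ < H y p 0 - H y 0 0 := by
      refine lt_of_mul_lt_mul_left ?_ hRpos.le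
      linarith
    have h5 : 0 ≤ |K| * R := by positivity
    linarith [hball 0 (by simpa using hRpos.le)]

/-- The properties of the Lagrangian on which the analysis of the action functions relies. -/
structure IsRegularLagrangian (M : Set (Euc n)) (L : Euc n → Euc n → ℝ → ℝ) (lam : ℝ) :
    Prop where
  lam_nonneg : 0 ≤ lam
  measurable : Measurable fun z : Euc n × Euc n × ℝ => L z.1 z.2.1 z.2.2
  abs_sub_le : ∀ x v u w, |L x v u - L x v w| ≤ lam * |u - w|
  lower_bound : ∃ A, 0 ≤ A ∧ ∀ x ∈ M, ∀ v, -A ≤ L x v 0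
  upper_bound : ∀ K, ∃ C, ∀ x ∈ M, ∀ v, ‖v‖ ≤ K → L x v 0 ≤ C

theorem IsLegendre.isRegularLagrangian {H L : Euc n → Euc n → ℝ → ℝ} {lam : ℝ}
    (hLeg : IsLegendre H L) (hlam : 0 ≤ lam) (hC3 : C3 H) (hH1 : PosDefInP H)
    (hH2 : Superlinear H) (hH3 : LipInU H lam) {M : Set (Euc n)} (hM : IsCompact M) :
    IsRegularLagrangian M L lam := by
  have hbdd : ∀ x v u, BddAbove {r | ∃ p : Euc n, r = ⟪p, v⟫ - H x p u} := by
    intro x v u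
    obtain ⟨C, hC⟩ := exists_linear_lower_bound hC3 hH1 hH2 hH3 (isCompact_singleton (x := x)) ‖v‖
    refine ⟨C + lam * |u|, ?_⟩
    rintro _ ⟨p, rfl⟩
    have h1 := hC x rfl p u
    have h2 := real_inner_le_norm p v
    linarith [mul_comm ‖p‖ ‖v‖]
  have hne : ∀ x v u, {r | ∃ p : Euc n, r = ⟪p, v⟫ - H x p u}.Nonempty :=
    fun x v u => ⟨_, 0, rfl⟩
  have hle : ∀ x p v u, ⟪p, v⟫ - H x p u ≤ L x v u := fun x p v u => by
    rw [hLeg]; exact le_csSup (hbdd x v u) ⟨p, rfl⟩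
  have hlip : ∀ x v u w, L x v u ≤ L x v w + lam * |u - w| := by
    intro x v u w
    rw [hLeg x v u]
    refine csSup_le (hne x v u) ?_
    rintro _ ⟨p, rfl⟩
    linarith [hle x p v w, (abs_le.mp (hC3.abs_sub_le hH3 x p u w)).1]
  refine ⟨hlam, ?_, ?_, ?_, ?_⟩
  · refine measurable_of_Ioi fun c => IsOpen.measurableSet ?_
    have : (fun z : Euc n × Euc n × ℝ => L z.1 z.2.1 z.2.2) ⁻¹' Ioi c =
        ⋃ p : Euc n, {z | c < ⟪p, z.2.1⟫ - H z.1 p z.2.2} := by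
      ext z
      simp only [mem_preimage, mem_Ioi, mem_iUnion, mem_ofPred_eq]
      rw [hLeg, lt_csSup_iff (hbdd _ _ _) (hne _ _ _)]
      constructor
      · rintro ⟨_, ⟨p, rfl⟩, hp⟩
        exact ⟨p, hp⟩
      · rintro ⟨p, hp⟩
        exact ⟨_, ⟨p, rfl⟩, hp⟩
    rw [this]
    refine isOpen_iUnion fun p => isOpen_lt continuous_const ?_
    have := hC3.continuous.comp (f := fun z : Euc n × Euc n × ℝ => (z.1, p, z.2.2)) (by fun_prop)
    exact (by fun_prop : Continuous fun z : Euc n × Euc n × ℝ => ⟪p, z.2.1⟫).sub this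
  · intro x v u w
    rw [abs_le]
    constructor
    · have := hlip x v w u
      rw [abs_sub_comm] at this
      linarith
    · linarith [hlip x v u w]
  · have hcont : Continuous fun x : Euc n => H x 0 0 :=
      hC3.continuous.comp (f := fun x : Euc n => (x, (0 : Euc n), (0:ℝ))) (by fun_prop)
    obtain ⟨A, hA⟩ := (hM.image hcont).bddAbove
    refine ⟨max A 0, le_max_right _ _, fun x hx v => ?_⟩
    have h1 := hle x 0 v 0
    rw [inner_zero_left, zero_sub] at h1
    linarith [hA ⟨x, hx, rfl⟩, le_max_left A 0]
  · intro K
    obtain ⟨C, hC⟩ := exists_linear_lower_bound hC3 hH1 hH2 hH3 hM K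
    refine ⟨C, fun x hx v hv => ?_⟩
    rw [hLeg]
    refine csSup_le (hne x v 0) ?_
    rintro _ ⟨p, rfl⟩
    have h1 := hC x hx p 0
    have h2 := real_inner_le_norm p v
    have h3 : ‖p‖ * ‖v‖ ≤ ‖p‖ * K := by gcongr
    rw [abs_zero, mul_zero] at h1
    linarith

/-- Lipschitz curves in `M` on `[0, t]` starting at `x₀`. -/
def IsAdmissible (M : Set (Euc n)) (x₀ : Euc n) (t : ℝ) (γ : ℝ → Euc n) : Prop :=
  (∃ K : ℝ≥0, LipschitzOnWith K γ (Icc 0 t)) ∧ (∀ τ ∈ Icc (0:ℝ) t, γ τ ∈ M) ∧ γ 0 = x₀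

/-- The Lagrangian along a curve `γ`, with the value variable given by `h (γ τ) τ`. -/
def lagrangianAlong (L : Euc n → Euc n → ℝ → ℝ) (h : Euc n → ℝ → ℝ) (γ : ℝ → Euc n) (τ : ℝ) : ℝ :=
  L (γ τ) (deriv γ τ) (h (γ τ) τ)

/-- The set of actions of admissible curves reaching `x` at time `t`. -/
def actionSet (M : Set (Euc n)) (L : Euc n → Euc n → ℝ → ℝ) (h : Euc n → ℝ → ℝ) (x₀ x : Euc n)
    (t : ℝ) : Set ℝ :=
  {a | ∃ γ : ℝ → Euc n, IsAdmissible M x₀ t γ ∧ γ t = x ∧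
    a = ∫ τ in (0:ℝ)..t, lagrangianAlong L h γ τ}

/-- The implicit variational principle for a fixed initial point and value. -/
structure IsImplicitAction (M : Set (Euc n)) (L : Euc n → Euc n → ℝ → ℝ) (x₀ : Euc n) (u₀ : ℝ)
    (h : Euc n → ℝ → ℝ) : Prop where
  continuousOn : ContinuousOn (fun q : Euc n × ℝ => h q.1 q.2) (M ×ˢ Ioi 0)
  eq_add_sInf : ∀ x ∈ M, ∀ t > 0, h x t = u₀ + sInf (actionSet M L h x₀ x t)

theorem IsBackwardAction.isImplicitAction {M : Set (Euc n)} {L : Euc n → Euc n → ℝ → ℝ}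
    {hb : Euc n → ℝ → Euc n → ℝ → ℝ} (hhb : IsBackwardAction M L hb) {x₀ : Euc n} (hx₀ : x₀ ∈ M)
    (u₀ : ℝ) : IsImplicitAction M L x₀ u₀ (hb x₀ u₀) := by
  refine ⟨?_, fun x hx t ht => ?_⟩
  · exact hhb.1.comp (f := fun q : Euc n × ℝ => (x₀, u₀, q.1, q.2))
      (Continuous.continuousOn (by fun_prop)) fun q hq => ⟨hx₀, mem_univ _, hq.1, hq.2⟩
  · rw [hhb.2 x₀ hx₀ u₀ x hx t ht]
    simp only [actionSet, IsAdmissible, lagrangianAlong, and_assoc]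

section ImplicitAction

variable {M : Set (Euc n)} {L : Euc n → Euc n → ℝ → ℝ} {lam : ℝ} {x₀ : Euc n} {u₀ : ℝ}
  {h : Euc n → ℝ → ℝ} {γ η : ℝ → Euc n} {a s t : ℝ}

theorem IsRegularLagrangian.exists_abs_le (hL : IsRegularLagrangian M L lam) (K : ℝ) :
    ∃ C, ∀ x ∈ M, ∀ v, ‖v‖ ≤ K → ∀ u, |L x v u| ≤ C + lam * |u| := by
  obtain ⟨A, hA0, hA⟩ := hL.lower_bound
  obtain ⟨C, hC⟩ := hL.upper_bound K
  refine ⟨max A C, fun x hx v hv u => ?_⟩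
  have h1 : |L x v 0| ≤ max A C :=
    abs_le.mpr ⟨by linarith [hA x hx v, le_max_left A C], (hC x hx v hv).trans (le_max_right _ _)⟩
  have h2 := hL.abs_sub_le x v u 0
  rw [sub_zero] at h2
  linarith [abs_sub_abs_le_abs_sub (L x v u) (L x v 0)]

namespace IsAdmissible

theorem mono (hγ : IsAdmissible M x₀ t γ) (hs : s ≤ t) : IsAdmissible M x₀ s γ := by
  obtain ⟨⟨K, hK⟩, hM, h0⟩ := hγ
  exact ⟨⟨K, hK.mono (Icc_subset_Icc_right hs)⟩, fun τ hτ => hM τ ⟨hτ.1, hτ.2.trans hs⟩, h0⟩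

theorem continuousOn_value (hγ : IsAdmissible M x₀ t γ) (hh : IsImplicitAction M L x₀ u₀ h) :
    ContinuousOn (fun τ => h (γ τ) τ) (Ioc 0 t) := by
  obtain ⟨⟨K, hK⟩, hM, -⟩ := hγ
  exact hh.continuousOn.comp (f := fun τ => (γ τ, τ))
    ((hK.continuousOn.mono Ioc_subset_Icc_self).prodMk continuousOn_id)
    fun τ hτ => ⟨hM τ (Ioc_subset_Icc_self hτ), hτ.1⟩

theorem intervalIntegrable_of_bounded (hL : IsRegularLagrangian M L lam)
    (hγ : IsAdmissible M x₀ t γ) (hh : IsImplicitAction M L x₀ u₀ h) (ha : 0 ≤ a) (hat : a ≤ t)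
    {C : ℝ} (hC : ∀ τ ∈ Ioo a t, |h (γ τ) τ| ≤ C) :
    IntervalIntegrable (lagrangianAlong L h γ) volume a t := by
  have hval := hγ.continuousOn_value hh
  obtain ⟨⟨K, hK⟩, hM, -⟩ := hγ
  obtain ⟨D, hD⟩ := hL.exists_abs_le K
  rw [intervalIntegrable_iff_integrableOn_Ioo_of_le hat]
  have hsub : Ioo a t ⊆ Ioc 0 t := fun τ hτ => ⟨ha.trans_lt hτ.1, hτ.2.le⟩
  refine Integrable.of_bound ?_ (D + lam * C) ?_
  · refine AEMeasurable.aestronglyMeasurable ?_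
    refine hL.measurable.comp_aemeasurable (f := fun τ => (γ τ, deriv γ τ, h (γ τ) τ)) ?_
    refine AEMeasurable.prodMk ?_ (AEMeasurable.prodMk ?_ ?_)
    · exact (hK.continuousOn.mono (hsub.trans Ioc_subset_Icc_self)).aemeasurable measurableSet_Ioo
    · exact (measurable_deriv γ).aemeasurable
    · exact (hval.mono hsub).aemeasurable measurableSet_Ioo
  · refine (ae_restrict_mem measurableSet_Ioo).mono fun τ hτ => ?_
    have h1 : Icc 0 t ∈ 𝓝 τ := Icc_mem_nhds (hsub hτ).1 hτ.2
    have h2 := hD (γ τ) (hM τ (Ioc_subset_Icc_self (hsub hτ))) (deriv γ τ)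
      (norm_deriv_le_of_lipschitzOn h1 hK) (h (γ τ) τ)
    refine h2.trans ?_
    have := mul_le_mul_of_nonneg_left (hC τ hτ) hL.lam_nonneg
    linarith

theorem intervalIntegrable_of_pos (hL : IsRegularLagrangian M L lam)
    (hγ : IsAdmissible M x₀ t γ) (hh : IsImplicitAction M L x₀ u₀ h) (ha : 0 < a) (hat : a ≤ t) :
    IntervalIntegrable (lagrangianAlong L h γ) volume a t := by
  have hc : ContinuousOn (fun τ => h (γ τ) τ) (Icc a t) :=
    (hγ.continuousOn_value hh).mono fun τ hτ => ⟨ha.trans_le hτ.1, hτ.2⟩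
  obtain ⟨C, hC⟩ := isCompact_Icc.exists_bound_of_continuousOn hc
  exact hγ.intervalIntegrable_of_bounded hL hh ha.le hat fun τ hτ => hC τ (Ioo_subset_Icc_self hτ)

theorem value_le (hγ : IsAdmissible M x₀ t γ) (hh : IsImplicitAction M L x₀ u₀ h) (ht : 0 < t)
    (hb : BddBelow (actionSet M L h x₀ (γ t) t)) :
    h (γ t) t ≤ u₀ + ∫ τ in (0:ℝ)..t, lagrangianAlong L h γ τ := by
  rw [hh.eq_add_sInf _ (hγ.2.1 t ⟨ht.le, le_rfl⟩) t ht]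
  gcongr
  exact csInf_le hb ⟨γ, hγ, rfl, rfl⟩

/-- Concatenation of admissible curves. -/
theorem add_integral_mem_actionSet (hL : IsRegularLagrangian M L lam)
    (hγ : IsAdmissible M x₀ t γ) (hη : IsAdmissible M x₀ s η) (hh : IsImplicitAction M L x₀ u₀ h)
    (hs : 0 < s) (hst : s ≤ t) (heq : η s = γ s)
    (hint : IntervalIntegrable (lagrangianAlong L h η) volume 0 s) :
    (∫ τ in (0:ℝ)..s, lagrangianAlong L h η τ) + ∫ τ in s..t, lagrangianAlong L h γ τ ∈
      actionSet M L h x₀ (γ t) t := by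
  set ζ : ℝ → Euc n := fun τ => if τ ≤ s then η τ else γ τ with hζ
  have hζη : ∀ τ ≤ s, ζ τ = η τ := fun τ hτ => if_pos hτ
  have hζγ : ∀ τ, s ≤ τ → ζ τ = γ τ := fun τ hτ => by
    rcases hτ.eq_or_lt with rfl | hτ
    · rw [hζη s le_rfl, heq]
    · exact if_neg (not_le.mpr hτ)
  have hgη : ∀ τ ∈ Ioo 0 s, lagrangianAlong L h ζ τ = lagrangianAlong L h η τ := by
    intro τ hτ
    have : ζ =ᶠ[𝓝 τ] η := (eventually_le_nhds hτ.2).mono hζη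
    simp only [lagrangianAlong, this.deriv_eq, this.eq_of_nhds]
  have hgγ : ∀ τ ∈ Ioo s t, lagrangianAlong L h ζ τ = lagrangianAlong L h γ τ := by
    intro τ hτ
    have : ζ =ᶠ[𝓝 τ] γ := (eventually_ge_nhds hτ.1).mono hζγ
    simp only [lagrangianAlong, this.deriv_eq, this.eq_of_nhds]
  have hadm : IsAdmissible M x₀ t ζ := by
    obtain ⟨⟨K, hK⟩, hηM, hη0⟩ := hη
    obtain ⟨⟨N, hN⟩, hγM, -⟩ := hγ
    refine ⟨⟨max K N, ?_⟩, fun τ hτ => ?_, by rw [hζη 0 hs.le, hη0]⟩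
    · have hleft : ∀ b c, 0 ≤ b → b ≤ c → c ≤ s → dist (ζ b) (ζ c) ≤ max K N * (c - b) := by
        intro b c hb hbc hc
        rw [hζη b (hbc.trans hc), hζη c hc]
        refine (hK.dist_le_mul b ⟨hb, hbc.trans hc⟩ c ⟨hb.trans hbc, hc⟩).trans ?_
        rw [dist_comm, Real.dist_eq, abs_of_nonneg (sub_nonneg.mpr hbc)]
        gcongr
        exact le_max_left _ _
      have hright : ∀ b c, s ≤ b → b ≤ c → c ≤ t → dist (ζ b) (ζ c) ≤ max K N * (c - b) := by
        intro b c hb hbc hc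
        rw [hζγ b hb, hζγ c (hb.trans hbc)]
        refine (hN.dist_le_mul b ⟨hs.le.trans hb, hbc.trans hc⟩ c
          ⟨hs.le.trans (hb.trans hbc), hc⟩).trans ?_
        rw [dist_comm, Real.dist_eq, abs_of_nonneg (sub_nonneg.mpr hbc)]
        gcongr
        exact le_max_right _ _
      have hall : ∀ b c, 0 ≤ b → b ≤ c → c ≤ t → dist (ζ b) (ζ c) ≤ max K N * (c - b) := by
        intro b c hb hbc hc
        rcases le_total c s with hcs | hcs
        · exact hleft b c hb hbc hcs
        rcases le_total s b with hsb | hsb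
        · exact hright b c hsb hbc hc
        · have := dist_triangle (ζ b) (ζ s) (ζ c)
          linarith [hleft b s hb hsb le_rfl, hright s c le_rfl hcs hc]
      refine LipschitzOnWith.of_dist_le_mul fun b hb c hc => ?_
      rw [NNReal.coe_max, Real.dist_eq]
      rcases le_total b c with hbc | hbc
      · rw [abs_sub_comm, abs_of_nonneg (sub_nonneg.mpr hbc)]
        exact hall b c hb.1 hbc hc.2
      · rw [dist_comm, abs_of_nonneg (sub_nonneg.mpr hbc)]
        exact hall c b hc.1 hbc hb.2
    · rcases le_total τ s with h1 | h1
      · rw [hζη τ h1]; exact hηM τ ⟨hτ.1, h1⟩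
      · rw [hζγ τ h1]; exact hγM τ hτ
  have hint₁ : IntervalIntegrable (lagrangianAlong L h ζ) volume 0 s := by
    rw [intervalIntegrable_iff_integrableOn_Ioo_of_le hs.le] at hint ⊢
    exact hint.congr_fun (fun τ hτ => (hgη τ hτ).symm) measurableSet_Ioo
  refine ⟨ζ, hadm, hζγ t hst, ?_⟩
  rw [← intervalIntegral.integral_add_adjacent_intervals hint₁
    (hadm.intervalIntegrable_of_pos hL hh hs hst)]
  congr 1
  · rw [intervalIntegral.integral_of_le hs.le, intervalIntegral.integral_of_le hs.le,
      integral_Ioc_eq_integral_Ioo, integral_Ioc_eq_integral_Ioo]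
    exact setIntegral_congr_fun measurableSet_Ioo fun τ hτ => (hgη τ hτ).symm
  · rw [intervalIntegral.integral_of_le hst, intervalIntegral.integral_of_le hst,
      integral_Ioc_eq_integral_Ioo, integral_Ioc_eq_integral_Ioo]
    exact setIntegral_congr_fun measurableSet_Ioo fun τ hτ => (hgγ τ hτ).symm

end IsAdmissible

theorem IsRegularLagrangian.exists_neg_le (hL : IsRegularLagrangian M L lam) :
    ∃ A, 0 ≤ A ∧ ∀ x ∈ M, ∀ v u, -A - lam * |u| ≤ L x v u := by
  obtain ⟨A, hA0, hA⟩ := hL.lower_bound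
  refine ⟨A, hA0, fun x hx v u => ?_⟩
  have h1 := hL.abs_sub_le x v u 0
  rw [sub_zero] at h1
  linarith [hA x hx v, (abs_le.mp h1).1]

namespace IsImplicitAction

theorem eq_of_not_bddBelow (hh : IsImplicitAction M L x₀ u₀ h) {x : Euc n} (hx : x ∈ M)
    (ht : 0 < t) (hb : ¬BddBelow (actionSet M L h x₀ x t)) : h x t = u₀ := by
  rw [hh.eq_add_sInf x hx t ht, Real.sInf_of_not_bddBelow hb, add_zero]

theorem exists_integral_lt (hh : IsImplicitAction M L x₀ u₀ h) {x : Euc n} (hx : x ∈ M)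
    (ht : 0 < t) (hne : (actionSet M L h x₀ x t).Nonempty) {c : ℝ} (hc : h x t < c) :
    ∃ γ, IsAdmissible M x₀ t γ ∧ γ t = x ∧
      u₀ + ∫ τ in (0:ℝ)..t, lagrangianAlong L h γ τ < c := by
  rw [hh.eq_add_sInf x hx t ht, ← lt_sub_iff_add_lt'] at hc
  obtain ⟨_, ⟨γ, hγ, hγx, rfl⟩, hlt⟩ := exists_lt_of_csInf_lt hne hc
  exact ⟨γ, hγ, hγx, lt_sub_iff_add_lt'.mp hlt⟩

/-- An implicit action is bounded below, locally uniformly in time. -/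
theorem exists_neg_le (hh : IsImplicitAction M L x₀ u₀ h) (hL : IsRegularLagrangian M L lam)
    (T : ℝ) : ∃ C, 0 ≤ C ∧ ∀ t ∈ Ioc 0 T, ∀ x ∈ M, -C ≤ h x t := by
  obtain ⟨A, hA0, hA⟩ := hL.exists_neg_le
  have hlam := hL.lam_nonneg
  set B := A + lam * (|u₀| + 1) with hB
  have hB0 : 0 ≤ B := by positivity
  refine ⟨|u₀| + 1 + B * max T 0 * Real.exp (lam * max T 0), by positivity,
    fun t ht x hx => ?_⟩
  have hu := neg_abs_le u₀
  have hE : 0 ≤ B * max T 0 * Real.exp (lam * max T 0) := by positivity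
  by_cases hne : (actionSet M L h x₀ x t).Nonempty
  swap
  · rw [hh.eq_add_sInf x hx t ht.1, not_nonempty_iff_eq_empty.mp hne, Real.sInf_empty]
    linarith
  by_cases hbdd : BddBelow (actionSet M L h x₀ x t)
  swap
  · rw [hh.eq_of_not_bddBelow hx ht.1 hbdd]
    linarith
  obtain ⟨σ, hσ, rfl, hσlt⟩ := hh.exists_integral_lt hx ht.1 hne (lt_add_one _)
  by_cases hint : IntervalIntegrable (lagrangianAlong L h σ) volume 0 t
  swap
  · rw [intervalIntegral.integral_undef hint] at hσlt
    linarith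
  have hsplit : ∀ s ∈ Ioo 0 t, (∫ τ in (0:ℝ)..s, lagrangianAlong L h σ τ) +
      ∫ τ in s..t, lagrangianAlong L h σ τ = ∫ τ in (0:ℝ)..t, lagrangianAlong L h σ τ := by
    intro s hs
    refine intervalIntegral.integral_add_adjacent_intervals (hint.mono_set ?_)
      (hσ.intervalIntegrable_of_pos hL hh hs.1 hs.2.le)
    rw [uIcc_of_le hs.1.le, uIcc_of_le ht.1.le]
    exact Icc_subset_Icc_right hs.2.le
  have hcat : ∀ s ∈ Ioo 0 t, ∀ η, IsAdmissible M x₀ s η → η s = σ s →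
      (∫ τ in (0:ℝ)..s, lagrangianAlong L h η τ) < 0 →
      h (σ t) t ≤ u₀ + ((∫ τ in (0:ℝ)..s, lagrangianAlong L h η τ) +
        ∫ τ in s..t, lagrangianAlong L h σ τ) := by
    intro s hs η hη heq hneg
    have hηint : IntervalIntegrable (lagrangianAlong L h η) volume 0 s := by
      by_contra hcon
      rw [intervalIntegral.integral_undef hcon] at hneg
      exact lt_irrefl _ hneg
    rw [hh.eq_add_sInf _ hx t ht.1]
    gcongr
    exact csInf_le hbdd (hσ.add_integral_mem_actionSet hL hη hh hs.1 hs.2.le heq hηint)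
  have hval : ∀ s ∈ Ioo 0 t, |h (σ s) s| ≤
      |u₀| + 1 + |∫ τ in (0:ℝ)..s, lagrangianAlong L h σ τ| := by
    intro s hs
    have hσs : σ s ∈ M := hσ.2.1 s (Ioo_subset_Icc_self hs)
    have hsp := hsplit s hs
    have hbs : BddBelow (actionSet M L h x₀ (σ s) s) := by
      by_contra hcon
      obtain ⟨_, ⟨η, hη, heq, rfl⟩, hlt⟩ := not_bddBelow_iff.mp hcon
        (min 0 (h (σ t) t - u₀ - ∫ τ in s..t, lagrangianAlong L h σ τ))
      have := hcat s hs η hη heq (hlt.trans_le (min_le_left _ _))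
      linarith [hlt.trans_le (min_le_right _ _)]
    refine abs_le.mpr ⟨?_, ?_⟩
    · by_contra! hcon
      obtain ⟨η, hη, heq, hlt⟩ := hh.exists_integral_lt hσs hs.1 ⟨_, σ, hσ.mono hs.2.le, rfl, rfl⟩
        hcon
      have habs := neg_abs_le (∫ τ in (0:ℝ)..s, lagrangianAlong L h σ τ)
      have hnn := abs_nonneg (∫ τ in (0:ℝ)..s, lagrangianAlong L h σ τ)
      have := hcat s hs η hη heq (by linarith)
      linarith
    · have := (hσ.mono hs.2.le).value_le hh hs.1 hbs
      linarith [le_abs_self u₀, le_abs_self (∫ τ in (0:ℝ)..s, lagrangianAlong L h σ τ)]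
  have hlow := neg_mul_exp_le_integral hB0 hlam ht.1.le hint fun s hs => by
    have h1 := hA (σ s) (hσ.2.1 s (Ioo_subset_Icc_self hs)) (deriv σ s) (h (σ s) s)
    have h2 := mul_le_mul_of_nonneg_left (hval s hs) hlam
    rw [lagrangianAlong]
    linarith
  have htT : t ≤ max T 0 := ht.2.trans (le_max_left _ _)
  have hmono : B * t * Real.exp (lam * t) ≤ B * max T 0 * Real.exp (lam * max T 0) := by
    gcongr
  linarith

end IsImplicitAction

namespace IsAdmissible

theorem value_le_add_abs (hγ : IsAdmissible M x₀ t γ) (hh : IsImplicitAction M L x₀ u₀ h)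
    (ht : 0 < t) : h (γ t) t ≤ u₀ + |∫ τ in (0:ℝ)..t, lagrangianAlong L h γ τ| := by
  by_cases hb : BddBelow (actionSet M L h x₀ (γ t) t)
  · linarith [hγ.value_le hh ht hb, le_abs_self (∫ τ in (0:ℝ)..t, lagrangianAlong L h γ τ)]
  · rw [hh.eq_of_not_bddBelow (hγ.2.1 t ⟨ht.le, le_rfl⟩) ht hb]
    linarith [abs_nonneg (∫ τ in (0:ℝ)..t, lagrangianAlong L h γ τ)]

theorem intervalIntegrable_lagrangianAlong (hγ : IsAdmissible M x₀ t γ)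
    (hh : IsImplicitAction M L x₀ u₀ h) (hL : IsRegularLagrangian M L lam) (ht : 0 < t) :
    IntervalIntegrable (lagrangianAlong L h γ) volume 0 t := by
  by_contra hcon
  obtain ⟨C, hC0, hC⟩ := hh.exists_neg_le hL t
  refine hcon (hγ.intervalIntegrable_of_bounded hL hh le_rfl ht.le (C := C + |u₀|)
    fun s hs => abs_le.mpr ⟨?_, ?_⟩)
  · linarith [hC s ⟨hs.1, hs.2.le⟩ (γ s) (hγ.2.1 s (Ioo_subset_Icc_self hs)), abs_nonneg u₀]
  · have hs' : ¬IntervalIntegrable (lagrangianAlong L h γ) volume 0 s := fun hi =>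
      hcon (hi.trans (hγ.intervalIntegrable_of_pos hL hh hs.1 hs.2.le))
    have := (hγ.mono hs.2.le).value_le_add_abs hh hs.1
    rw [intervalIntegral.integral_undef hs', abs_zero] at this
    linarith [le_abs_self u₀]

end IsAdmissible

namespace IsImplicitAction

theorem bddBelow_actionSet (hh : IsImplicitAction M L x₀ u₀ h) (hL : IsRegularLagrangian M L lam)
    (ht : 0 < t) (x : Euc n) : BddBelow (actionSet M L h x₀ x t) := by
  obtain ⟨A, hA0, hA⟩ := hL.exists_neg_le
  obtain ⟨C, hC0, hC⟩ := hh.exists_neg_le hL t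
  have hlam := hL.lam_nonneg
  refine ⟨-((A + lam * (C + |u₀|)) * t * Real.exp (lam * t)), ?_⟩
  rintro _ ⟨γ, hγ, -, rfl⟩
  refine neg_mul_exp_le_integral (by positivity) hlam ht.le
    (hγ.intervalIntegrable_lagrangianAlong hh hL ht) fun s hs => ?_
  have hγs := hγ.2.1 s (Ioo_subset_Icc_self hs)
  have h1 := hA (γ s) hγs (deriv γ s) (h (γ s) s)
  have h2 : |h (γ s) s| ≤ C + |u₀| + |∫ τ in (0:ℝ)..s, lagrangianAlong L h γ τ| := by
    refine abs_le.mpr ⟨?_, ?_⟩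
    · linarith [hC s ⟨hs.1, hs.2.le⟩ (γ s) hγs, abs_nonneg u₀,
        abs_nonneg (∫ τ in (0:ℝ)..s, lagrangianAlong L h γ τ)]
    · linarith [(hγ.mono hs.2.le).value_le_add_abs hh hs.1, le_abs_self u₀]
  have h3 := mul_le_mul_of_nonneg_left h2 hlam
  rw [lagrangianAlong]
  linarith

/-- Sub-optimality in the dynamic programming principle. -/
theorem value_le_add_integral (hh : IsImplicitAction M L x₀ u₀ h)
    (hL : IsRegularLagrangian M L lam) (hγ : IsAdmissible M x₀ t γ) (hs : 0 < s) (hst : s ≤ t) :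
    h (γ t) t ≤ h (γ s) s + ∫ τ in s..t, lagrangianAlong L h γ τ := by
  have ht := hs.trans_le hst
  have hγs : γ s ∈ M := hγ.2.1 s ⟨hs.le, hst⟩
  refine le_of_forall_pos_lt_add fun ε hε => ?_
  obtain ⟨η, hη, heq, hlt⟩ := hh.exists_integral_lt hγs hs ⟨_, γ, hγ.mono hst, rfl, rfl⟩
    (lt_add_of_pos_right _ hε)
  have h1 := csInf_le (hh.bddBelow_actionSet hL ht (γ t)) (hγ.add_integral_mem_actionSet hL hη hh hs
    hst heq (hη.intervalIntegrable_lagrangianAlong hh hL hs))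
  rw [hh.eq_add_sInf _ (hγ.2.1 t ⟨ht.le, le_rfl⟩) t ht]
  linarith

/-- Implicit actions are strictly increasing in the initial value. -/
theorem lt_of_lt {u₁ u₂ : ℝ} {h₁ h₂ : Euc n → ℝ → ℝ} (hh₁ : IsImplicitAction M L x₀ u₁ h₁)
    (hh₂ : IsImplicitAction M L x₀ u₂ h₂) (hL : IsRegularLagrangian M L lam) (hu : u₁ < u₂)
    (ht : 0 < t) {x : Euc n} (hx : x ∈ M) : h₁ x t < h₂ x t := by
  by_cases hne : (actionSet M L h₂ x₀ x t).Nonempty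
  swap
  · have hne₁ : ¬(actionSet M L h₁ x₀ x t).Nonempty := fun ⟨_, γ, hγ, hγx, _⟩ =>
      hne ⟨_, γ, hγ, hγx, rfl⟩
    rw [hh₁.eq_add_sInf x hx t ht, hh₂.eq_add_sInf x hx t ht, not_nonempty_iff_eq_empty.mp hne,
      not_nonempty_iff_eq_empty.mp hne₁]
    linarith
  by_contra! hle
  have hlam := hL.lam_nonneg
  set E := Real.exp (lam * t) with hE
  have hE0 : 0 < E := Real.exp_pos _
  set ε := (u₂ - u₁) / (2 * (1 + E)) with hε
  have hε0 : 0 < ε := div_pos (by linarith) (by positivity)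
  obtain ⟨σ, hσ, rfl, hσlt⟩ := hh₂.exists_integral_lt hx ht hne (lt_add_of_pos_right _ hε0)
  set F₁ : ℝ → ℝ := fun s => ∫ τ in (0:ℝ)..s, lagrangianAlong L h₁ σ τ with hF₁
  set F₂ : ℝ → ℝ := fun s => ∫ τ in (0:ℝ)..s, lagrangianAlong L h₂ σ τ with hF₂
  have hi₁ := hσ.intervalIntegrable_lagrangianAlong hh₁ hL ht
  have hi₂ := hσ.intervalIntegrable_lagrangianAlong hh₂ hL ht
  have hsub : ∀ r s, 0 ≤ r → r ≤ s → s ≤ t → uIcc r s ⊆ uIcc 0 t := fun r s hr hrs hs => by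
    rw [uIcc_of_le hrs, uIcc_of_le ht.le]
    exact Icc_subset_Icc hr hs
  have hsp₂ : ∀ r s, 0 ≤ r → r ≤ s → s ≤ t →
      F₂ r + ∫ τ in r..s, lagrangianAlong L h₂ σ τ = F₂ s := fun r s hr hrs hs =>
    intervalIntegral.integral_add_adjacent_intervals
      (hi₂.mono_set (hsub 0 r le_rfl hr (hrs.trans hs))) (hi₂.mono_set (hsub r s hr hrs hs))
  have hlow₂ : ∀ s ∈ Ioc 0 t, u₂ + F₂ s - ε ≤ h₂ (σ s) s := fun s hs => by
    have h1 := hh₂.value_le_add_integral hL hσ hs.1 hs.2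
    have h2 := hsp₂ s t hs.1.le hs.2 le_rfl
    linarith
  have hup₁ : ∀ s ∈ Ioc 0 t, h₁ (σ s) s ≤ u₁ + F₁ s := fun s hs =>
    (hσ.mono hs.2).value_le hh₁ hs.1 (hh₁.bddBelow_actionSet hL hs.1 _)
  have hup₂ : ∀ s ∈ Ioc 0 t, h₂ (σ s) s ≤ u₂ + F₂ s := fun s hs =>
    (hσ.mono hs.2).value_le hh₂ hs.1 (hh₂.bddBelow_actionSet hL hs.1 _)
  set D : ℝ → ℝ := fun s => h₂ (σ s) s - h₁ (σ s) s with hD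
  have hDc : ContinuousOn D (Ioc 0 t) :=
    (hσ.continuousOn_value hh₂).sub (hσ.continuousOn_value hh₁)
  have hDle : ∀ b ∈ Ioo 0 t, D b ≤ ε * E := by
    intro b hb
    have hmaps : ∀ s ∈ Icc 0 (t - b), t - s ∈ Ioc 0 t := fun s hs =>
      ⟨by linarith [hs.2, hb.1], by linarith [hs.1]⟩
    have hP := le_mul_exp_of_le_integral_of_pos (P := fun s => D (t - s)) (a := ε) (lam := lam)
      (T := t - b) hε0.le hlam
      (hDc.comp (f := fun s => t - s) (Continuous.continuousOn (by fun_prop)) hmaps)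
      (by simpa [hD] using hle) (fun r s hr hrs hs hPr hpos => ?_) (t - b)
      ⟨by linarith [hb.2], le_rfl⟩
    · simp only [sub_sub_cancel] at hP
      refine hP.trans ?_
      rw [hE]
      gcongr
      linarith [hb.1]
    have hs0 : t - s ∈ Ioc 0 t := hmaps s ⟨hr.trans hrs.le, hs⟩
    have hr0 : t - r ∈ Ioc 0 t := hmaps r ⟨hr, hrs.le.trans hs⟩
    have hle' : t - s ≤ t - r := by linarith
    have hDi : IntervalIntegrable D volume (t - s) (t - r) := by
      refine (hDc.mono ?_).intervalIntegrable
      rw [uIcc_of_le hle']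
      exact fun q hq => ⟨hs0.1.trans_le hq.1, hq.2.trans hr0.2⟩
    have hj₁ := hi₁.mono_set (hsub (t - s) (t - r) hs0.1.le hle' hr0.2)
    have hj₂ := hi₂.mono_set (hsub (t - s) (t - r) hs0.1.le hle' hr0.2)
    have hmono : ∫ q in (t - s)..(t - r), (lagrangianAlong L h₁ σ q - lagrangianAlong L h₂ σ q) ≤
        ∫ q in (t - s)..(t - r), lam * D q := by
      refine intervalIntegral.integral_mono_on_of_le_Ioo hle' (hj₁.sub hj₂)
        (hDi.const_mul lam) fun q hq => ?_
      have hq1 := hpos (t - q) ⟨by linarith [hq.2], by linarith [hq.1]⟩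
      rw [sub_sub_cancel] at hq1
      have hq2 := hL.abs_sub_le (σ q) (deriv σ q) (h₁ (σ q) q) (h₂ (σ q) q)
      rw [abs_sub_comm (h₁ _ _), abs_of_pos hq1] at hq2
      exact (le_abs_self _).trans hq2
    rw [intervalIntegral.integral_sub hj₁ hj₂, intervalIntegral.integral_const_mul] at hmono
    rw [intervalIntegral.integral_comp_sub_left (fun q => D q) t]
    have h1 := (hh₁.value_le_add_integral hL (hσ.mono hr0.2) hs0.1 hle')
    have h2 := hsp₂ (t - s) (t - r) hs0.1.le hle' hr0.2
    have h3 := hlow₂ (t - r) hr0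
    have h4 := hup₂ (t - s) hs0
    simp only [hD] at hPr hmono ⊢
    linarith
  have hFc : Tendsto (fun s => u₂ + F₂ s - ε - (u₁ + F₁ s)) (𝓝[>] 0) (𝓝 (u₂ - ε - u₁)) := by
    have hc₁ := intervalIntegral.continuousOn_primitive_interval' hi₁ left_mem_uIcc 0 left_mem_uIcc
    have hc₂ := intervalIntegral.continuousOn_primitive_interval' hi₂ left_mem_uIcc 0 left_mem_uIcc
    have hc := ((hc₂.const_add u₂).sub_const ε).sub (hc₁.const_add u₁)
    rw [uIcc_of_le ht.le] at hc
    simpa using hc.mono_left (nhdsWithin_le_of_mem (Icc_mem_nhdsGT ht))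
  have hfin := le_of_tendsto hFc (b := ε * E) <| by
    filter_upwards [Ioo_mem_nhdsGT ht] with b hb
    have h1 := hDle b hb
    have h2 := hlow₂ b ⟨hb.1, hb.2.le⟩
    have h3 := hup₁ b ⟨hb.1, hb.2.le⟩
    simp only [hD] at h1
    linarith
  have h5 : ε * (2 * (1 + E)) = u₂ - u₁ := div_mul_cancel₀ _ (by positivity)
  linarith [mul_pos hε0 hE0]

end IsImplicitAction

end ImplicitAction

/-- **Proposition 2.2(2) (Monotonicity)**: the backward implicit action function is
strictly increasing in the initial value `u₀`. -/
theorem backward_action_monotone {n : ℕ}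
    (H L : Euc n → Euc n → ℝ → ℝ) (lam : ℝ) (hlam : 0 < lam)
    (hC3 : C3 H) (hH1 : PosDefInP H) (hH2 : Superlinear H) (hH3 : LipInU H lam)
    (M : Set (Euc n)) (hM : IsCompact M) (hMconn : IsConnected M)
    (Φ : ℝ → Euc n × Euc n × ℝ → Euc n × Euc n × ℝ) (hΦ : IsContactFlow H Φ)
    (hLeg : IsLegendre H L)
    (hb : Euc n → ℝ → Euc n → ℝ → ℝ) (hhb : IsBackwardAction M L hb) :
    ∀ x₀ ∈ M, ∀ u₁ u₂ : ℝ, u₁ < u₂ → ∀ t > (0:ℝ), ∀ x ∈ M,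
      hb x₀ u₁ x t < hb x₀ u₂ x t := by
  intro x₀ hx₀ u₁ u₂ hu t ht x hx
  exact (hhb.isImplicitAction hx₀ u₁).lt_of_lt (hhb.isImplicitAction hx₀ u₂)
    (hLeg.isRegularLagrangian hlam.le hC3 hH1 hH2 hH3 hM) hu ht hx

end
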